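/- There exist positive absolute constants C, c such that for every positive integer n, every β with 0 < β ≤ 1, every l ∈ [n], and every real u ≥ β^{-1}, one has P( max_{j ∈ H_l} (l - j) ≥ u ) ≤ C u β^{-1} exp(-c √(β u)), where the maximum over the empty set is interpreted as 0. -/

import Mathlib

/-!
With `d = l - k`, the event `k ∈ H_l` forces `σ₀(k) > k + d/2` or `E_k ≥ d/2`. The second event has
probability `e^{-βd}`, so everything rests on a displacement tail
`P(σ₀(k) > k + d/2) ≤ 3 d e^{-c√(βd)}` (`displacement_bound`); a union bound over all `k ≤ l - u`
then gives the theorem, half of the exponent being used to make the series converge.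

View `σ` as the set of arcs `a → σ a`, and let the height `hgt σ j` be the number of up-arcs over the
gap `j | j + 1`, which is also the number of down-arcs over it. Two exchange arguments are used,
both comparing the weights of `σ` and `σ * swap a c`.

* `height_step`: exchanging the targets of an up-arc and of a down-arc over the same gap lowers the
  height by one. Counting pairs gives `H² P(hgt ≥ H) ≤ (3/β)² P(hgt ≥ H - 1)`, so beyond `6/β` the
  height has a tail decreasing by a factor `4` at each step (`height_tail`).
* `survival_swap`: for `k < i`, redirecting the arc of `k` to the target `i` (exchange with `σ⁻¹ i`)
  increases neither the energy nor any height, and the preimages of a given permutation have total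
  relative weight at most `M = H + 3/β` if the height at `i` is at most `H`. Hence
  `P(low, σ k > i) ≤ M P(low, σ k = i)`, where `low` bounds the heights on a window, and
  `P(low, σ k > k + t) ≤ (M / (M + 1))^t` (`survival_tail`).

Taking `H` equal to `6/β + √(βd)` up to rounding, which is at most of order `√(d/β)`, balances the
two estimates.
-/

open scoped BigOperators Classical ENNReal
open MeasureTheory

/-- The (unnormalized) Mallows weight `exp(-β ∑ᵢ |σ(i) - i|)` for the `L¹` distance.
Permutations of `[n] = {1, …, n}` are modeled as permutations of `Fin n`. -/
noncomputable def mallowsWeight (n : ℕ) (β : ℝ) (σ : Equiv.Perm (Fin n)) : ℝ :=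
  Real.exp (-β * ∑ i : Fin n, |((σ i : ℕ) : ℝ) - ((i : ℕ) : ℝ)|)

/-- The probability of `σ` under the Mallows permutation model `P_{n,β}`. -/
noncomputable def mallowsProb (n : ℕ) (β : ℝ) (σ : Equiv.Perm (Fin n)) : ℝ :=
  mallowsWeight n β σ / ∑ τ : Equiv.Perm (Fin n), mallowsWeight n β τ

instance (n : ℕ) : MeasurableSpace (Equiv.Perm (Fin n)) := ⊤

/-- The Mallows model `P_{n,β}` as a measure on `S_n`. -/
noncomputable def mallowsMeasure (n : ℕ) (β : ℝ) : Measure (Equiv.Perm (Fin n)) :=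
  ∑ σ : Equiv.Perm (Fin n),
    ENNReal.ofReal (mallowsProb n β σ) • MeasureTheory.Measure.dirac σ

/-- The probability space carrying `σ₀ ~ P_{n,β}` together with `n` i.i.d. exponential
random variables `E₁, …, E_n` of rate `2β`, independent of `σ₀`.  A sample point is
`ω = (σ₀, (E_k)_{k ∈ [n]})`. -/
noncomputable def hitRunMeasure (n : ℕ) (β : ℝ) :
    Measure (Equiv.Perm (Fin n) × (Fin n → ℝ)) :=
  (mallowsMeasure n β).prod
    (Measure.pi fun _ : Fin n => ProbabilityTheory.expMeasure (2 * β))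

/-- `b_k = max{k, σ₀(k)} + E_k` (so that, conditionally on `σ₀`,
`P(b_k ≥ x | σ₀) = exp(-2β (x - max{k, σ₀(k)})₊)`).  In `Fin n` coordinates all the
`b_k` and the thresholds `j` are shifted by one simultaneously. -/
noncomputable def bVal (n : ℕ) (ω : Equiv.Perm (Fin n) × (Fin n → ℝ)) (k : Fin n) : ℝ :=
  max ((k : ℕ) : ℝ) ((ω.1 k : ℕ) : ℝ) + ω.2 k

/-- `H_j = {k ∈ [n] : k ≤ j - 1, b_k ≥ j}`. -/
noncomputable def Hset (n : ℕ) (ω : Equiv.Perm (Fin n) × (Fin n → ℝ)) (j : Fin n) :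
    Finset (Fin n) :=
  Finset.univ.filter fun k => k < j ∧ ((j : ℕ) : ℝ) ≤ bVal n ω k

/-- `N_j = 1 + #{k ∈ [n] : k ≤ j - 1, b_k ≥ j}`. -/
noncomputable def Nval (n : ℕ) (ω : Equiv.Perm (Fin n) × (Fin n → ℝ)) (j : Fin n) : ℕ :=
  1 + (Hset n ω j).card

section Aux

variable {n : ℕ}

/-! ### Effect of a transposition on the weight; heights -/

/-- Effect of the exchange of the values at `k` and `m` on an additive statistic
`∑ a, f a (σ a)`, written without subtraction so that it serves for weights and for heights. -/
theorem sum_mul_swap {M : Type*} [AddCommMonoid M] (f : Fin n → Fin n → M)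
    (σ : Equiv.Perm (Fin n)) {k m : Fin n} (hkm : k ≠ m) :
    (∑ a, f a ((σ * Equiv.swap k m) a)) + (f k (σ k) + f m (σ m))
      = (∑ a, f a (σ a)) + (f k (σ m) + f m (σ k)) := by
  have key : ∀ g : Fin n → M, ∑ a, g a = (g k + g m) + ∑ a ∈ (Finset.univ.erase k).erase m, g a := by
    intro g
    rw [add_assoc, Finset.add_sum_erase _ _ (by simp [hkm.symm]),
      Finset.add_sum_erase _ _ (by simp)]
  rw [key, key fun a => f a (σ a)]
  have hrest : ∑ a ∈ (Finset.univ.erase k).erase m, f a ((σ * Equiv.swap k m) a)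
      = ∑ a ∈ (Finset.univ.erase k).erase m, f a (σ a) := by
    refine Finset.sum_congr rfl fun a ha => ?_
    simp only [Finset.mem_erase] at ha
    rw [Equiv.Perm.mul_apply, Equiv.swap_apply_of_ne_of_ne ha.2.1 ha.1]
  rw [hrest]
  simp only [Equiv.Perm.mul_apply, Equiv.swap_apply_left, Equiv.swap_apply_right]
  abel

theorem mallowsWeight_pos (β : ℝ) (σ : Equiv.Perm (Fin n)) : 0 < mallowsWeight n β σ :=
  Real.exp_pos _

theorem mallowsWeight_mul_swap (β : ℝ) (σ : Equiv.Perm (Fin n)) {k m : Fin n} (hkm : k ≠ m) :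
    mallowsWeight n β (σ * Equiv.swap k m) = mallowsWeight n β σ *
      Real.exp (-β * (|((σ m : ℕ) : ℝ) - (k : ℕ)| + |((σ k : ℕ) : ℝ) - (m : ℕ)|
        - |((σ k : ℕ) : ℝ) - (k : ℕ)| - |((σ m : ℕ) : ℝ) - (m : ℕ)|)) := by
  have h := sum_mul_swap (fun a b : Fin n => |((b : ℕ) : ℝ) - ((a : ℕ) : ℝ)|) σ hkm
  unfold mallowsWeight
  rw [← Real.exp_add]
  congr 1
  linear_combination (-β) * h

/-- The number of arcs `a → σ a` that jump upwards over the gap between `j` and `j + 1`. -/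
def hgt (σ : Equiv.Perm (Fin n)) (j : ℕ) : ℕ :=
  ∑ a : Fin n, if (a : ℕ) ≤ j ∧ j < (σ a : ℕ) then 1 else 0

/-- Every gap is crossed by as many down-arcs as up-arcs. -/
theorem hgt_eq_down (σ : Equiv.Perm (Fin n)) (j : ℕ) :
    hgt σ j = ∑ a : Fin n, if (σ a : ℕ) ≤ j ∧ j < (a : ℕ) then 1 else 0 := by
  have h1 : (∑ a : Fin n, if (a : ℕ) ≤ j then 1 else 0)
      = ∑ a : Fin n, if (σ a : ℕ) ≤ j then 1 else 0 :=
    (Equiv.sum_comp σ fun a : Fin n => if (a : ℕ) ≤ j then 1 else 0).symm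
  have h2 : hgt σ j + (∑ a : Fin n, if (σ a : ℕ) ≤ j then 1 else 0)
      = (∑ a : Fin n, if (σ a : ℕ) ≤ j ∧ j < (a : ℕ) then 1 else 0)
        + ∑ a : Fin n, if (a : ℕ) ≤ j then 1 else 0 := by
    unfold hgt
    rw [← Finset.sum_add_distrib, ← Finset.sum_add_distrib]
    refine Finset.sum_congr rfl fun a _ => ?_
    split_ifs <;> omega
  omega

/-! ### Geometric sums along a permutation -/

theorem sum_exp_le {β : ℝ} (hβ : 0 < β) (hβ1 : β ≤ 1) (s : Finset ℕ) :
    ∑ i ∈ s, Real.exp (-(2 * β) * i) ≤ 3 / (2 * β) := by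
  have hlt : Real.exp (-(2 * β)) < 1 := by rw [Real.exp_lt_one_iff]; linarith
  have hrw : ∀ i : ℕ, Real.exp (-(2 * β) * i) = Real.exp (-(2 * β)) ^ i := by
    intro i; rw [← Real.exp_nat_mul]; ring_nf
  simp_rw [hrw]
  refine (Summable.sum_le_tsum s (fun i _ => by positivity)
    (summable_geometric_of_lt_one (Real.exp_pos _).le hlt)).trans ?_
  rw [tsum_geometric_of_lt_one (Real.exp_pos _).le hlt]
  -- `1 - e^{-x} ≥ x / (1 + x)`, and `1 + x ≤ 3` for `x = 2β ≤ 2`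
  have h1 : Real.exp (-(2 * β)) ≤ 1 / (1 + 2 * β) := by
    rw [Real.exp_neg, inv_eq_one_div]
    exact one_div_le_one_div_of_le (by linarith) (by linarith [Real.add_one_le_exp (2 * β)])
  have h2 : 2 * β / 3 ≤ 1 - Real.exp (-(2 * β)) := by
    have : 1 / (1 + 2 * β) ≤ 1 - 2 * β / 3 := by
      rw [div_le_iff₀ (by linarith)]; nlinarith
    linarith
  calc (1 - Real.exp (-(2 * β)))⁻¹ ≤ (2 * β / 3)⁻¹ := inv_anti₀ (by positivity) h2
    _ = 3 / (2 * β) := by rw [inv_div]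

theorem sum_exp_inj_le {β : ℝ} (hβ : 0 < β) (hβ1 : β ≤ 1) (P : Fin n → Prop) (g : Fin n → ℕ)
    (hg : ∀ a b, P a → P b → g a = g b → a = b) :
    ∑ a : Fin n, (if P a then Real.exp (-(2 * β) * g a) else 0) ≤ 3 / (2 * β) := by
  rw [← Finset.sum_filter]
  have := Finset.sum_image (s := Finset.univ.filter P) (g := g)
    (f := fun i : ℕ => Real.exp (-(2 * β) * i))
    (by intro a ha b hb; simp at ha hb; exact hg a b ha hb)
  rw [← this]
  exact sum_exp_le hβ hβ1 _

/-- Each value of `min a (σ a)` is taken at most twice, so the sum is at most two geometric series. -/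
theorem sum_above_le {β : ℝ} (hβ : 0 < β) (hβ1 : β ≤ 1) (σ : Equiv.Perm (Fin n)) (j : ℕ) :
    ∑ a : Fin n, (if j ≤ (a : ℕ) ∧ j ≤ (σ a : ℕ) then
      Real.exp (-(2 * β) * (min ((a : ℕ) : ℝ) (σ a : ℕ) - j)) else 0) ≤ 3 / β := by
  have h1 := sum_exp_inj_le hβ hβ1 (fun a : Fin n => j ≤ (a : ℕ)) (fun a => (a : ℕ) - j)
    (by intro a b ha hb h; apply Fin.ext; omega)
  have h2 := sum_exp_inj_le hβ hβ1 (fun a : Fin n => j ≤ (σ a : ℕ)) (fun a => (σ a : ℕ) - j)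
    (by intro a b ha hb h; apply σ.injective; apply Fin.ext; omega)
  have h3 : 3 / β = 3 / (2 * β) + 3 / (2 * β) := by field_simp; norm_num
  rw [h3]
  refine le_trans ?_ (add_le_add h1 h2)
  rw [← Finset.sum_add_distrib]
  refine Finset.sum_le_sum fun a _ => ?_
  by_cases ha : j ≤ (a : ℕ) ∧ j ≤ (σ a : ℕ)
  · rw [if_pos ha, if_pos ha.1, if_pos ha.2, Nat.cast_sub ha.1, Nat.cast_sub ha.2]
    rcases min_choice ((a : ℕ) : ℝ) (σ a : ℕ) with h | h <;> rw [h]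
    · linarith [Real.exp_pos (-(2 * β) * (((σ a : ℕ) : ℝ) - j))]
    · linarith [Real.exp_pos (-(2 * β) * (((a : ℕ) : ℝ) - j))]
  · rw [if_neg ha]; positivity

/-- Mirror image of `sum_above_le`. -/
theorem sum_below_le {β : ℝ} (hβ : 0 < β) (hβ1 : β ≤ 1) (σ : Equiv.Perm (Fin n)) (j : ℕ) :
    ∑ a : Fin n, (if (a : ℕ) ≤ j ∧ (σ a : ℕ) ≤ j then
      Real.exp (-(2 * β) * (j - max ((a : ℕ) : ℝ) (σ a : ℕ))) else 0) ≤ 3 / β := by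
  have h1 := sum_exp_inj_le hβ hβ1 (fun a : Fin n => (a : ℕ) ≤ j) (fun a => j - (a : ℕ))
    (by intro a b ha hb h; apply Fin.ext; omega)
  have h2 := sum_exp_inj_le hβ hβ1 (fun a : Fin n => (σ a : ℕ) ≤ j) (fun a => j - (σ a : ℕ))
    (by intro a b ha hb h; apply σ.injective; apply Fin.ext; omega)
  have h3 : 3 / β = 3 / (2 * β) + 3 / (2 * β) := by field_simp; norm_num
  rw [h3]
  refine le_trans ?_ (add_le_add h1 h2)
  rw [← Finset.sum_add_distrib]
  refine Finset.sum_le_sum fun a _ => ?_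
  by_cases ha : (a : ℕ) ≤ j ∧ (σ a : ℕ) ≤ j
  · rw [if_pos ha, if_pos ha.1, if_pos ha.2, Nat.cast_sub ha.1, Nat.cast_sub ha.2]
    rcases max_choice ((a : ℕ) : ℝ) (σ a : ℕ) with h | h <;> rw [h]
    · linarith [Real.exp_pos (-(2 * β) * ((j : ℝ) - (σ a : ℕ)))]
    · linarith [Real.exp_pos (-(2 * β) * ((j : ℝ) - (a : ℕ)))]
  · rw [if_neg ha]; positivity

/-! ### Tail of the height -/

/-- The total (unnormalized) Mallows weight of the permutations satisfying `P`. -/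
noncomputable def wt (n : ℕ) (β : ℝ) (P : Equiv.Perm (Fin n) → Prop) : ℝ :=
  ∑ σ : Equiv.Perm (Fin n), if P σ then mallowsWeight n β σ else 0

theorem wt_nonneg (β : ℝ) (P : Equiv.Perm (Fin n) → Prop) : 0 ≤ wt n β P :=
  Finset.sum_nonneg fun σ _ => by split_ifs <;> simp [(mallowsWeight_pos β σ).le]

theorem wt_mono (β : ℝ) {P Q : Equiv.Perm (Fin n) → Prop} (h : ∀ σ, P σ → Q σ) :
    wt n β P ≤ wt n β Q := by
  refine Finset.sum_le_sum fun σ _ => ?_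
  have := (mallowsWeight_pos β σ).le
  have := h σ
  split_ifs <;> first | exact le_rfl | assumption | tauto

/-- Exchanging the values of an up-arc `a → σ a` and a down-arc `c → σ c` over the same gap `j`
lowers the height at `j` by one and divides the energy cost of their overlap out of the weight.
There are `hgt σ j ^ 2` such pairs, while the preimages of a given permutation have total relative
weight at most a product of two geometric sums. -/
theorem height_step {β : ℝ} (hβ : 0 < β) (hβ1 : β ≤ 1) (j H : ℕ) :
    ((H + 1 : ℕ) : ℝ) ^ 2 * wt n β (fun σ => H + 1 ≤ hgt σ j)
      ≤ (3 / β) ^ 2 * wt n β (fun σ => H ≤ hgt σ j) := by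
  -- the weight of triples `(σ, a, c)`, with `a → σ a` an up-arc and `c → σ c` a down-arc over `j`
  let F : Fin n → Fin n → Equiv.Perm (Fin n) → ℝ := fun a c σ =>
    if H + 1 ≤ hgt σ j ∧ ((a : ℕ) ≤ j ∧ j < (σ a : ℕ)) ∧ ((σ c : ℕ) ≤ j ∧ j < (c : ℕ)) then
      mallowsWeight n β σ else 0
  have hlow : ((H + 1 : ℕ) : ℝ) ^ 2 * wt n β (fun σ => H + 1 ≤ hgt σ j)
      ≤ ∑ σ, ∑ a, ∑ c, F a c σ := by
    unfold wt
    rw [Finset.mul_sum]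
    refine Finset.sum_le_sum fun σ _ => ?_
    by_cases hσ : H + 1 ≤ hgt σ j
    · have hw := (mallowsWeight_pos β σ).le
      have e : ∑ a, ∑ c, F a c σ = (hgt σ j : ℝ) * (hgt σ j : ℝ) * mallowsWeight n β σ := by
        conv_rhs =>
          enter [1, 2]
          rw [hgt_eq_down]
        unfold hgt
        push_cast
        rw [Finset.sum_mul_sum, Finset.sum_mul]
        refine Finset.sum_congr rfl fun a _ => ?_
        rw [Finset.sum_mul]
        refine Finset.sum_congr rfl fun c _ => ?_
        simp only [F]
        split_ifs <;> first | (exfalso; tauto) | simp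
      rw [e, if_pos hσ]
      have : ((H + 1 : ℕ) : ℝ) ≤ hgt σ j := by exact_mod_cast hσ
      have h0 : (0 : ℝ) ≤ ((H + 1 : ℕ) : ℝ) := by positivity
      gcongr
      nlinarith
    · rw [if_neg hσ, mul_zero]
      refine Finset.sum_nonneg fun a _ => Finset.sum_nonneg fun c _ => ?_
      simp only [F]
      split_ifs
      · exact (mallowsWeight_pos β σ).le
      · exact le_rfl
  refine hlow.trans ?_
  -- for fixed `a`, `c`, the map `σ ↦ σ * swap a c` is a bijection
  have hswap : ∑ σ, ∑ a, ∑ c, F a c σ = ∑ σ, ∑ a, ∑ c, F a c (σ * Equiv.swap a c) := by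
    rw [Finset.sum_comm, Finset.sum_comm (f := fun σ a => ∑ c, F a c (σ * Equiv.swap a c))]
    refine Finset.sum_congr rfl fun a _ => ?_
    rw [Finset.sum_comm, Finset.sum_comm (f := fun σ c => F a c (σ * Equiv.swap a c))]
    refine Finset.sum_congr rfl fun c _ => ?_
    exact (Equiv.sum_comp (Equiv.mulRight (Equiv.swap a c)) (F a c)).symm
  rw [hswap]
  unfold wt
  rw [Finset.mul_sum]
  refine Finset.sum_le_sum fun σ _ => ?_
  let A : Fin n → ℝ := fun a => if (a : ℕ) ≤ j ∧ (σ a : ℕ) ≤ j then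
      Real.exp (-(2 * β) * (j - max ((a : ℕ) : ℝ) (σ a : ℕ))) else 0
  let B : Fin n → ℝ := fun c => if j ≤ (c : ℕ) ∧ j ≤ (σ c : ℕ) then
      Real.exp (-(2 * β) * (min ((c : ℕ) : ℝ) (σ c : ℕ) - j)) else 0
  have hA0 : ∀ a, 0 ≤ A a := fun a => by simp only [A]; positivity
  have hB0 : ∀ a, 0 ≤ B a := fun a => by simp only [B]; positivity
  have hw := (mallowsWeight_pos β σ).le
  have hterm : ∀ a c, F a c (σ * Equiv.swap a c)
      ≤ A a * B c * (if H ≤ hgt σ j then mallowsWeight n β σ else 0) := by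
    intro a c
    by_cases h : H + 1 ≤ hgt (σ * Equiv.swap a c) j ∧
        ((a : ℕ) ≤ j ∧ j < ((σ * Equiv.swap a c) a : ℕ)) ∧
        (((σ * Equiv.swap a c) c : ℕ) ≤ j ∧ j < (c : ℕ))
    · simp only [F]
      rw [if_pos h]
      simp only [Equiv.Perm.mul_apply, Equiv.swap_apply_left, Equiv.swap_apply_right] at h
      obtain ⟨h1, ⟨h2, h3⟩, h4, h5⟩ := h
      have hac : a ≠ c := by rintro rfl; omega
      have hh := sum_mul_swap (fun x y : Fin n => if (x : ℕ) ≤ j ∧ j < (y : ℕ) then 1 else 0) σ hac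
      have hH : H ≤ hgt σ j := by
        unfold hgt at h1 ⊢
        rw [if_pos (⟨h2, h3⟩ : (a : ℕ) ≤ j ∧ j < (σ c : ℕ)),
          if_neg (by omega : ¬ ((a : ℕ) ≤ j ∧ j < (σ a : ℕ))),
          if_neg (by omega : ¬ ((c : ℕ) ≤ j ∧ j < (σ c : ℕ))),
          if_neg (by omega : ¬ ((c : ℕ) ≤ j ∧ j < (σ a : ℕ)))] at hh
        omega
      rw [if_pos hH, mallowsWeight_mul_swap β σ hac]
      simp only [A, B]
      rw [if_pos ⟨h2, h4⟩, if_pos ⟨h5.le, h3.le⟩, ← Real.exp_add, mul_comm]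
      refine mul_le_mul_of_nonneg_right (Real.exp_le_exp.2 (le_of_eq ?_)) hw
      have r2 : ((a : ℕ) : ℝ) ≤ j := by exact_mod_cast h2
      have r3 : (j : ℝ) ≤ (σ c : ℕ) := by exact_mod_cast h3.le
      have r4 : ((σ a : ℕ) : ℝ) ≤ j := by exact_mod_cast h4
      have r5 : (j : ℝ) ≤ (c : ℕ) := by exact_mod_cast h5.le
      rw [abs_of_nonneg (by linarith : (0 : ℝ) ≤ ((σ c : ℕ) : ℝ) - (a : ℕ)),
        abs_of_nonpos (by linarith : ((σ a : ℕ) : ℝ) - (c : ℕ) ≤ 0)]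
      rcases le_total ((a : ℕ) : ℝ) (σ a : ℕ) with ha | ha <;>
        rcases le_total ((c : ℕ) : ℝ) (σ c : ℕ) with hc | hc <;>
        simp only [ha, hc, max_eq_left, max_eq_right, min_eq_left, min_eq_right, abs_of_nonneg,
          abs_of_nonpos, sub_nonneg, sub_nonpos] <;> ring
    · simp only [F]
      rw [if_neg h]
      have : 0 ≤ (if H ≤ hgt σ j then mallowsWeight n β σ else 0) := by split_ifs <;> simp [hw]
      have := hA0 a
      have := hB0 c
      positivity
  have hS : (∑ a, A a) * (∑ c, B c) ≤ (3 / β) ^ 2 := by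
    rw [sq]
    exact mul_le_mul (sum_below_le hβ hβ1 σ j) (sum_above_le hβ hβ1 σ j)
      (Finset.sum_nonneg fun a _ => hB0 a) (by positivity)
  have hfin : ∑ a, ∑ c, F a c (σ * Equiv.swap a c)
      ≤ (3 / β) ^ 2 * (if H ≤ hgt σ j then mallowsWeight n β σ else 0) := calc
    _ ≤ ∑ a, ∑ c, A a * B c * (if H ≤ hgt σ j then mallowsWeight n β σ else 0) :=
        Finset.sum_le_sum fun a _ => Finset.sum_le_sum fun c _ => hterm a c
    _ = (∑ a, A a) * (∑ c, B c) * (if H ≤ hgt σ j then mallowsWeight n β σ else 0) := by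
        rw [Finset.sum_mul_sum, Finset.sum_mul]
        refine Finset.sum_congr rfl fun a _ => ?_
        rw [Finset.sum_mul]
    _ ≤ _ := mul_le_mul_of_nonneg_right hS (by split_ifs <;> simp [hw])
  refine hfin.trans (le_of_eq ?_)
  congr

theorem height_tail {β : ℝ} (hβ : 0 < β) (hβ1 : β ≤ 1) (j H₀ r : ℕ) (hH : 6 / β ≤ H₀) :
    wt n β (fun σ => H₀ + r ≤ hgt σ j) ≤ (1 / 4) ^ r * wt n β (fun _ => True) := by
  induction r with
  | zero => simpa using wt_mono β (fun σ _ => trivial)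
  | succ r ih =>
    have h := height_step (n := n) hβ hβ1 j (H₀ + r)
    have h0 := wt_nonneg (n := n) β (fun σ => H₀ + r + 1 ≤ hgt σ j)
    have hle : 6 / β ≤ ((H₀ + r + 1 : ℕ) : ℝ) := by push_cast; linarith [Nat.cast_nonneg (α := ℝ) r]
    have h6 : (0 : ℝ) < 3 / β := by positivity
    have e : 6 / β = 2 * (3 / β) := by ring
    rw [e] at hle
    have h2 : (2 * (3 / β)) ^ 2 * wt n β (fun σ => H₀ + r + 1 ≤ hgt σ j)
        ≤ (3 / β) ^ 2 * wt n β (fun σ => H₀ + r ≤ hgt σ j) :=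
      le_trans (mul_le_mul_of_nonneg_right (pow_le_pow_left₀ (by positivity) hle 2) h0) h
    have h3 : 4 * wt n β (fun σ => H₀ + r + 1 ≤ hgt σ j) ≤ wt n β (fun σ => H₀ + r ≤ hgt σ j) := by
      have : (3 / β) ^ 2 * (4 * wt n β (fun σ => H₀ + r + 1 ≤ hgt σ j))
        ≤ (3 / β) ^ 2 * wt n β (fun σ => H₀ + r ≤ hgt σ j) := by
        calc _ = _ := by ring
          _ ≤ _ := h2
      exact le_of_mul_le_mul_left this (by positivity)
    rw [pow_succ]
    change wt n β (fun σ => H₀ + r + 1 ≤ hgt σ j) ≤ _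
    linarith

/-! ### Tail of the displacement -/

/-- At most `H` up-arcs jump over each of the gaps at `k + 1, …, k + t`. -/
def Low (H k t : ℕ) (σ : Equiv.Perm (Fin n)) : Prop :=
  ∀ j, k < j → j ≤ k + t → hgt σ j ≤ H

/-- The key exchange. If `σ k > i > k`, let `m = σ⁻¹ i` and exchange the values at `k` and `m`, so
that `k` now goes to `i`. This never raises the energy nor any height. A permutation sending `k` to
`i` is reached from `m ≤ i`, which must be the source of an up-arc over `i` (at most `H` choices),
or from `m > i`, where the weights of the preimages form a geometric sum. -/
theorem survival_swap {β : ℝ} (hβ : 0 < β) (hβ1 : β ≤ 1) (H t : ℕ) (k i : Fin n) (hki : k < i)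
    (hit : (i : ℕ) ≤ k + t) :
    wt n β (fun σ => Low H k t σ ∧ i < σ k)
      ≤ (H + 3 / β) * wt n β (fun σ => Low H k t σ ∧ σ k = i) := by
  -- the weight of `σ`, recorded at the unique `m` with `σ m = i`
  let F : Fin n → Equiv.Perm (Fin n) → ℝ := fun m σ =>
    if (Low H k t σ ∧ i < σ k) ∧ σ m = i then mallowsWeight n β σ else 0
  have hlow : wt n β (fun σ => Low H k t σ ∧ i < σ k) = ∑ σ, ∑ m, F m σ := by
    unfold wt
    refine Finset.sum_congr rfl fun σ _ => ?_
    rw [Finset.sum_eq_single (σ.symm i)]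
    · simp [F]
    · intro m _ hm
      simp only [F]
      rw [if_neg]
      rintro ⟨-, rfl⟩
      simp at hm
    · simp
  have hswap : ∑ σ, ∑ m, F m σ = ∑ σ, ∑ m, F m (σ * Equiv.swap k m) := by
    rw [Finset.sum_comm, Finset.sum_comm (f := fun σ m => F m (σ * Equiv.swap k m))]
    refine Finset.sum_congr rfl fun m _ => ?_
    exact (Equiv.sum_comp (Equiv.mulRight (Equiv.swap k m)) (F m)).symm
  rw [hlow, hswap]
  unfold wt
  rw [Finset.mul_sum]
  refine Finset.sum_le_sum fun σ _ => ?_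
  have hw := (mallowsWeight_pos β σ).le
  let A : Fin n → ℝ := fun m => if (m : ℕ) ≤ i ∧ (i : ℕ) < (σ m : ℕ) then 1 else 0
  let B : Fin n → ℝ := fun m => if (i : ℕ) ≤ (m : ℕ) ∧ (i : ℕ) ≤ (σ m : ℕ) then
      Real.exp (-(2 * β) * (min ((m : ℕ) : ℝ) (σ m : ℕ) - (i : ℕ))) else 0
  have hA0 : ∀ a, 0 ≤ A a := fun a => by simp only [A]; positivity
  have hB0 : ∀ a, 0 ≤ B a := fun a => by simp only [B]; positivity
  have hAs : ∑ m, A m = hgt σ i := by simp only [A]; unfold hgt; push_cast; rfl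
  have hBs : ∑ m, B m ≤ 3 / β := sum_above_le hβ hβ1 σ i
  have hterm : ∀ m, F m (σ * Equiv.swap k m)
      ≤ (A m + B m) * (if Low H k t σ ∧ σ k = i then mallowsWeight n β σ else 0) := by
    intro m
    by_cases h : (Low H k t (σ * Equiv.swap k m) ∧ i < (σ * Equiv.swap k m) k) ∧
        (σ * Equiv.swap k m) m = i
    · simp only [F]
      rw [if_pos h]
      simp only [Equiv.Perm.mul_apply, Equiv.swap_apply_left, Equiv.swap_apply_right] at h
      obtain ⟨⟨h1, h2⟩, h3⟩ := h
      have hkm : k ≠ m := by rintro rfl; rw [h3] at h2; exact lt_irrefl _ h2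
      have n2 : (i : ℕ) < (σ m : ℕ) := h2
      have nk : (k : ℕ) < (i : ℕ) := hki
      have hL : Low H k t σ := by
        intro j hj1 hj2
        refine le_trans ?_ (h1 j hj1 hj2)
        have hh := sum_mul_swap
          (fun x y : Fin n => if (x : ℕ) ≤ j ∧ j < (y : ℕ) then 1 else 0) σ hkm
        rw [h3] at hh
        unfold hgt
        split_ifs at hh <;> omega
      rw [if_pos ⟨hL, h3⟩, mallowsWeight_mul_swap β σ hkm, mul_comm, h3]
      refine mul_le_mul_of_nonneg_right ?_ hw
      have r2 : ((i : ℕ) : ℝ) < (σ m : ℕ) := by exact_mod_cast n2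
      have rk : ((k : ℕ) : ℝ) < (i : ℕ) := by exact_mod_cast nk
      rw [abs_of_nonneg (by linarith : (0 : ℝ) ≤ ((σ m : ℕ) : ℝ) - (k : ℕ)),
        abs_of_nonneg (by linarith : (0 : ℝ) ≤ ((i : ℕ) : ℝ) - (k : ℕ))]
      rcases le_or_gt (m : ℕ) (i : ℕ) with hm | hm
      · have rm : ((m : ℕ) : ℝ) ≤ (i : ℕ) := by exact_mod_cast hm
        have hA : A m = 1 := if_pos ⟨hm, n2⟩
        rw [abs_of_nonneg (by linarith : (0 : ℝ) ≤ ((i : ℕ) : ℝ) - (m : ℕ)),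
          abs_of_nonneg (by linarith : (0 : ℝ) ≤ ((σ m : ℕ) : ℝ) - (m : ℕ))]
        ring_nf
        rw [Real.exp_zero, hA]
        linarith [hB0 m]
      · have rm : ((i : ℕ) : ℝ) < (m : ℕ) := by exact_mod_cast hm
        have hB : B m = Real.exp (-(2 * β) * (min ((m : ℕ) : ℝ) (σ m : ℕ) - (i : ℕ))) :=
          if_pos ⟨hm.le, n2.le⟩
        rw [hB]
        refine le_trans (le_of_eq ?_) (le_add_of_nonneg_left (hA0 m))
        congr 1
        rw [abs_of_nonpos (by linarith : ((i : ℕ) : ℝ) - (m : ℕ) ≤ 0)]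
        rcases le_total ((m : ℕ) : ℝ) (σ m : ℕ) with hc | hc <;>
          simp only [hc, min_eq_left, min_eq_right, abs_of_nonneg,
            abs_of_nonpos, sub_nonneg, sub_nonpos] <;> ring
    · simp only [F]
      rw [if_neg h]
      have : 0 ≤ (if Low H k t σ ∧ σ k = i then mallowsWeight n β σ else 0) := by
        split_ifs <;> simp [hw]
      have := hA0 m
      have := hB0 m
      positivity
  refine (Finset.sum_le_sum fun m _ => hterm m).trans ?_
  rw [← Finset.sum_mul, Finset.sum_add_distrib, hAs]
  by_cases h : Low H k t σ ∧ σ k = i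
  · rw [if_pos h, if_pos h]
    refine mul_le_mul_of_nonneg_right (add_le_add ?_ hBs) hw
    exact_mod_cast h.1 i hki hit
  · rw [if_neg h, if_neg h]; simp

/-- The arc from `k` survives one more gap with conditional probability at most `M / (M + 1)`,
where `M = H + 3 / β`. If `k + s + 1 ≥ n` the left-hand side vanishes. -/
theorem survival_step {β : ℝ} (hβ : 0 < β) (hβ1 : β ≤ 1) (H t : ℕ) (k : Fin n) (s : ℕ)
    (hst : s + 1 ≤ t) :
    (H + 3 / β + 1) * wt n β (fun σ => Low H k t σ ∧ (k : ℕ) + (s + 1) < (σ k : ℕ))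
      ≤ (H + 3 / β) * wt n β (fun σ => Low H k t σ ∧ (k : ℕ) + s < (σ k : ℕ)) := by
  have hM : (0 : ℝ) ≤ H + 3 / β := by positivity
  by_cases hi : (k : ℕ) + (s + 1) < n
  · have h := survival_swap hβ hβ1 H t k ⟨k + (s + 1), hi⟩ (by simp [Fin.lt_def])
      (by simp only; omega)
    have e1 : wt n β (fun σ => Low H k t σ ∧ (k : ℕ) + s < (σ k : ℕ))
        = wt n β (fun σ => Low H k t σ ∧ σ k = ⟨k + (s + 1), hi⟩)
          + wt n β (fun σ => Low H k t σ ∧ (k : ℕ) + (s + 1) < (σ k : ℕ)) := by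
      unfold wt
      rw [← Finset.sum_add_distrib]
      refine Finset.sum_congr rfl fun σ _ => ?_
      have hx : (k : ℕ) + s < (σ k : ℕ) ↔
          (σ k = ⟨k + (s + 1), hi⟩ ∨ (k : ℕ) + (s + 1) < (σ k : ℕ)) := by
        rw [Fin.ext_iff]; simp only; omega
      have hy : ¬ (σ k = ⟨k + (s + 1), hi⟩ ∧ (k : ℕ) + (s + 1) < (σ k : ℕ)) := by
        rw [Fin.ext_iff]; simp only; omega
      by_cases h1 : Low H k t σ <;> by_cases h2 : σ k = ⟨k + (s + 1), hi⟩ <;>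
        by_cases h3 : (k : ℕ) + (s + 1) < (σ k : ℕ) <;> simp_all
      rw [if_neg (by omega), if_neg (by omega)]
    rw [e1]
    have e2 : wt n β (fun σ => Low H k t σ ∧ (⟨k + (s + 1), hi⟩ : Fin n) < σ k)
        = wt n β (fun σ => Low H k t σ ∧ (k : ℕ) + (s + 1) < (σ k : ℕ)) := rfl
    rw [e2] at h
    linarith
  · have e0 : wt n β (fun σ => Low H k t σ ∧ (k : ℕ) + (s + 1) < (σ k : ℕ)) = 0 := by
      unfold wt
      refine Finset.sum_eq_zero fun σ _ => ?_
      rw [if_neg]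
      rintro ⟨-, h⟩
      have := (σ k).isLt
      omega
    rw [e0, mul_zero]
    exact mul_nonneg hM (wt_nonneg _ _)

theorem survival_tail {β : ℝ} (hβ : 0 < β) (hβ1 : β ≤ 1) (H t : ℕ) (k : Fin n) :
    wt n β (fun σ => Low H k t σ ∧ (k : ℕ) + t < (σ k : ℕ))
      ≤ Real.exp (-(t / (H + 3 / β + 1))) * wt n β (fun _ => True) := by
  have hM : (0 : ℝ) < H + 3 / β := by positivity
  have hfac : (H + 3 / β) / (H + 3 / β + 1) ≤ Real.exp (-(1 / (H + 3 / β + 1))) := by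
    refine le_trans (le_of_eq ?_) (Real.add_one_le_exp _)
    field_simp
    ring
  have main : ∀ s : ℕ, s ≤ t → wt n β (fun σ => Low H k t σ ∧ (k : ℕ) + s < (σ k : ℕ))
      ≤ Real.exp (-(s / (H + 3 / β + 1))) * wt n β (fun _ => True) := by
    intro s
    induction s with
    | zero => intro _; simpa using wt_mono β (fun σ _ => trivial)
    | succ s ih =>
      intro hs
      have h1 := survival_step hβ hβ1 H t k s hs
      have h2 := ih (by omega)
      have h0 := wt_nonneg (n := n) β (fun σ => Low H k t σ ∧ (k : ℕ) + s < (σ k : ℕ))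
      have e : Real.exp (-((s + 1 : ℕ) / (H + 3 / β + 1)))
          = Real.exp (-(1 / (H + 3 / β + 1))) * Real.exp (-(s / (H + 3 / β + 1))) := by
        rw [← Real.exp_add]; congr 1; push_cast; ring
      rw [e, mul_assoc]
      calc _ ≤ (H + 3 / β) / (H + 3 / β + 1)
              * wt n β (fun σ => Low H k t σ ∧ (k : ℕ) + s < (σ k : ℕ)) := by
            rw [div_mul_eq_mul_div, le_div_iff₀ (by linarith)]; linarith
        _ ≤ _ := mul_le_mul hfac h2 h0 (Real.exp_pos _).le
  exact main t le_rfl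

theorem displacement_tail {β : ℝ} (hβ : 0 < β) (hβ1 : β ≤ 1) (H₀ r t : ℕ) (hH : 6 / β ≤ H₀)
    (k : Fin n) :
    wt n β (fun σ => (k : ℕ) + t < (σ k : ℕ))
      ≤ (Real.exp (-(t / (((H₀ + r : ℕ) : ℝ) + 3 / β + 1))) + t * (1 / 4) ^ r)
        * wt n β (fun _ => True) := by
  have h1 := survival_tail hβ hβ1 (H₀ + r) t k
  have h2 : ∀ j, wt n β (fun σ => H₀ + r ≤ hgt σ j) ≤ (1 / 4) ^ r * wt n β (fun _ => True) :=
    fun j => height_tail hβ hβ1 j H₀ r hH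
  have h3 : wt n β (fun σ => (k : ℕ) + t < (σ k : ℕ))
      ≤ wt n β (fun σ => Low (H₀ + r) k t σ ∧ (k : ℕ) + t < (σ k : ℕ))
        + ∑ j ∈ Finset.Ioc (k : ℕ) (k + t), wt n β (fun σ => H₀ + r ≤ hgt σ j) := by
    unfold wt
    rw [Finset.sum_comm, ← Finset.sum_add_distrib]
    refine Finset.sum_le_sum fun σ _ => ?_
    have hw := (mallowsWeight_pos β σ).le
    have hnn : ∀ j ∈ Finset.Ioc (k : ℕ) (k + t),
        0 ≤ (if H₀ + r ≤ hgt σ j then mallowsWeight n β σ else 0) := by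
      intro j _; split_ifs <;> simp [hw]
    have hs := Finset.sum_nonneg hnn
    by_cases ha : (k : ℕ) + t < (σ k : ℕ)
    · by_cases hl : Low (H₀ + r) k t σ
      · rw [if_pos ha, if_pos ⟨hl, ha⟩]
        refine le_add_of_nonneg_right (le_of_le_of_eq hs ?_)
        congr!
      · rw [if_pos ha, if_neg (by tauto), zero_add]
        unfold Low at hl
        push Not at hl
        obtain ⟨j, hj1, hj2, hj3⟩ := hl
        have := Finset.single_le_sum hnn (Finset.mem_Ioc.2 ⟨hj1, hj2⟩)
        rw [if_pos hj3.le] at this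
        refine this.trans (le_of_eq ?_)
        congr!
    · rw [if_neg ha, if_neg (by tauto), zero_add]
      refine le_of_le_of_eq hs ?_
      congr!
  have h4 : ∑ j ∈ Finset.Ioc (k : ℕ) (k + t), wt n β (fun σ => H₀ + r ≤ hgt σ j)
      ≤ t * ((1 / 4) ^ r * wt n β (fun _ => True)) := by
    refine (Finset.sum_le_sum fun j _ => h2 j).trans (le_of_eq ?_)
    simp
  rw [add_mul]
  linarith

/-- Choice of the height threshold `⌈6 / β⌉ + ⌈√(βd)⌉`: it is of order at most `√(d / β)`, so the
survival bound over `d / 2` gaps and the height bound are both exponentially small in `√(βd)`. -/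
theorem displacement_bound {β : ℝ} (hβ : 0 < β) (hβ1 : β ≤ 1) (d : ℕ) (hd : 1 ≤ β * d)
    (k : Fin n) :
    wt n β (fun σ => (k : ℕ) + d / 2 < (σ k : ℕ))
      ≤ 3 * d * Real.exp (-(Real.sqrt (β * d) / 26)) * wt n β (fun _ => True) := by
  refine (displacement_tail hβ hβ1 ⌈6 / β⌉₊ ⌈Real.sqrt (β * d)⌉₊ (d / 2) (Nat.le_ceil _) k).trans ?_
  refine mul_le_mul_of_nonneg_right ?_ (wt_nonneg _ _)
  set X := Real.sqrt (β * d) with hX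
  have hX2 : X ^ 2 = β * d := Real.sq_sqrt (by positivity)
  have hX1 : 1 ≤ X := by rw [hX]; exact Real.one_le_sqrt.2 hd
  have hdX : X ^ 2 ≤ d := by
    rw [hX2]; nlinarith [Nat.cast_nonneg (α := ℝ) d]
  have hd1 : (1 : ℝ) ≤ d := by nlinarith
  have hXd : X ≤ d := by nlinarith
  have hc1 : (⌈6 / β⌉₊ : ℝ) < 6 / β + 1 := Nat.ceil_lt_add_one (by positivity)
  have hc2 : (⌈X⌉₊ : ℝ) < X + 1 := Nat.ceil_lt_add_one (by linarith)
  -- both `1 / β` and `X = √(βd)` are at most `d / X = √(d / β)`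
  have hinv : 1 / β = d / X ^ 2 := by
    rw [hX2]; field_simp
  have hb1 : 1 ≤ 1 / β := by rw [le_div_iff₀ hβ]; linarith
  have hb2 : 1 / β ≤ d / X := by
    rw [hinv]; gcongr; nlinarith
  have hb3 : X ≤ d / X := by rw [le_div_iff₀ (by linarith)]; nlinarith
  have hM : ((⌈6 / β⌉₊ + ⌈X⌉₊ : ℕ) : ℝ) + 3 / β + 1 ≤ 13 * (d / X) := by
    push_cast
    have e6 : 6 / β = 6 * (1 / β) := by ring
    have e3 : 3 / β = 3 * (1 / β) := by ring
    rw [e6] at hc1 ⊢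
    rw [e3]
    linarith
  have hMpos : 0 < ((⌈6 / β⌉₊ + ⌈X⌉₊ : ℕ) : ℝ) + 3 / β + 1 := by positivity
  have ht : ((d : ℝ) - 1) / 2 ≤ ((d / 2 : ℕ) : ℝ) := by
    have : d ≤ 2 * (d / 2) + 1 := by omega
    have : (d : ℝ) ≤ 2 * ((d / 2 : ℕ) : ℝ) + 1 := by exact_mod_cast this
    linarith
  have ht2 : ((d / 2 : ℕ) : ℝ) ≤ d := by exact_mod_cast Nat.div_le_self d 2
  have hexp1 : Real.exp (-(((d / 2 : ℕ) : ℝ) / (((⌈6 / β⌉₊ + ⌈X⌉₊ : ℕ) : ℝ) + 3 / β + 1)))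
      ≤ 2 * Real.exp (-(X / 26)) := by
    have hq : X / 26 - 1 / 26 ≤
        ((d / 2 : ℕ) : ℝ) / (((⌈6 / β⌉₊ + ⌈X⌉₊ : ℕ) : ℝ) + 3 / β + 1) := by
      rw [le_div_iff₀ hMpos]
      calc (X / 26 - 1 / 26) * (((⌈6 / β⌉₊ + ⌈X⌉₊ : ℕ) : ℝ) + 3 / β + 1)
          ≤ (X / 26 - 1 / 26) * (13 * (d / X)) :=
            mul_le_mul_of_nonneg_left hM (by linarith)
        _ = (d - d / X) / 2 := by field_simp; ring
        _ ≤ (d - 1) / 2 := by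
            have : 1 ≤ d / X := by rw [le_div_iff₀ (by linarith)]; linarith
            linarith
        _ ≤ _ := ht
    calc _ ≤ Real.exp (1 / 26 + -(X / 26)) := Real.exp_le_exp.2 (by linarith)
      _ = Real.exp (1 / 26) * Real.exp (-(X / 26)) := Real.exp_add _ _
      _ ≤ _ := by
        gcongr
        have h1 : Real.exp (1 / 26) ≤ Real.exp (Real.log 2) :=
          Real.exp_le_exp.2 (by linarith [Real.log_two_gt_d9])
        rwa [Real.exp_log (by norm_num)] at h1
  have hexp2 : ((1 : ℝ) / 4) ^ ⌈X⌉₊ ≤ Real.exp (-(X / 26)) := by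
    have h4 : (1 : ℝ) / 4 ≤ Real.exp (-1) := by
      rw [Real.exp_neg, one_div]
      exact inv_anti₀ (Real.exp_pos _) (by linarith [Real.exp_one_lt_d9])
    calc ((1 : ℝ) / 4) ^ ⌈X⌉₊ ≤ Real.exp (-1) ^ ⌈X⌉₊ := pow_le_pow_left₀ (by norm_num) h4 _
      _ = Real.exp (-(⌈X⌉₊ : ℝ)) := by rw [← Real.exp_nat_mul]; ring_nf
      _ ≤ _ := Real.exp_le_exp.2 (by linarith [Nat.le_ceil X])
  have hpos := Real.exp_pos (-(X / 26))
  have : ((d / 2 : ℕ) : ℝ) * (1 / 4) ^ ⌈X⌉₊ ≤ d * Real.exp (-(X / 26)) :=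
    mul_le_mul ht2 hexp2 (by positivity) (by positivity)
  nlinarith

/-! ### Summation over the starting points -/

/-- Half of the exponent is kept for the final bound; the other half is traded for
`(βd)⁻³` through `x ^ 6 / 6! ≤ e ^ x`, which makes the bound summable in `d`. -/
theorem exp_inv_sq_bound {β u : ℝ} (hβ : 0 < β) (d : ℕ) (hd : 1 ≤ β * d) (hu : u ≤ d) :
    4 * d * Real.exp (-(Real.sqrt (β * d) / 26))
      ≤ 4 * (720 * 52 ^ 6) * Real.exp (-(1 / 52) * Real.sqrt (β * u)) * (β ^ 3)⁻¹
        * ((d : ℝ) ^ 2)⁻¹ := by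
  set X := Real.sqrt (β * d) with hX
  have hX2 : X ^ 2 = β * d := Real.sq_sqrt (by positivity)
  have hX1 : 1 ≤ X := by rw [hX]; exact Real.one_le_sqrt.2 hd
  have hd0 : (0 : ℝ) < d := by
    rcases (Nat.cast_nonneg (α := ℝ) d).lt_or_eq with h | h
    · exact h
    · rw [← h] at hd; norm_num at hd
  have hmono : Real.sqrt (β * u) ≤ X := Real.sqrt_le_sqrt (by gcongr)
  have h1 : Real.exp (-(X / 52)) ≤ 720 * 52 ^ 6 / (β * d) ^ 3 := by
    have h := Real.pow_div_factorial_le_exp (X / 52) (by positivity) 6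
    rw [Real.exp_neg, ← hX2, inv_le_comm₀ (Real.exp_pos _) (by positivity)]
    refine le_trans (le_of_eq ?_) h
    simp only [Nat.factorial]
    field_simp
    norm_num
  have h2 : Real.exp (-(X / 26)) = Real.exp (-(X / 52)) * Real.exp (-(X / 52)) := by
    rw [← Real.exp_add]; ring_nf
  have h3 : Real.exp (-(X / 52)) ≤ Real.exp (-(1 / 52) * Real.sqrt (β * u)) :=
    Real.exp_le_exp.2 (by linarith)
  rw [h2]
  calc _ ≤ 4 * d * (Real.exp (-(1 / 52) * Real.sqrt (β * u)) * (720 * 52 ^ 6 / (β * d) ^ 3)) := by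
        gcongr
    _ = _ := by field_simp

theorem sum_inv_sq_bound {u : ℝ} (hu0 : 0 < u) (l : Fin n) :
    ∑ k : Fin n with k < l ∧ u ≤ ((l : ℕ) - (k : ℕ) : ℕ), ((((l : ℕ) - (k : ℕ) : ℕ) : ℝ) ^ 2)⁻¹
      ≤ 2 / u := by
  have h1 : 0 < ⌈u⌉₊ := Nat.ceil_pos.2 hu0
  have e := Finset.sum_image
    (s := Finset.univ.filter fun k : Fin n => k < l ∧ u ≤ ((l : ℕ) - (k : ℕ) : ℕ))
    (g := fun k : Fin n => (l : ℕ) - (k : ℕ)) (f := fun i : ℕ => ((i : ℝ) ^ 2)⁻¹) (by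
      intro a ha b hb h
      simp only [Finset.coe_filter, Finset.mem_univ, true_and, Set.mem_ofPred_eq, Fin.lt_def]
        at ha hb h
      apply Fin.ext
      omega)
  rw [← e]
  have h2 := sum_Ioo_inv_sq_le (α := ℝ) (⌈u⌉₊ - 1) n
  have e2 : ((⌈u⌉₊ - 1 : ℕ) : ℝ) + 1 = ⌈u⌉₊ := by
    exact_mod_cast Nat.sub_add_cancel h1
  rw [e2] at h2
  refine (Finset.sum_le_sum_of_subset_of_nonneg ?_ fun _ _ _ => by positivity).trans
    (h2.trans (by gcongr; exact Nat.le_ceil u))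
  intro i hi
  simp only [Finset.mem_image, Finset.mem_filter, Finset.mem_univ, true_and] at hi
  obtain ⟨k, ⟨-, hk⟩, rfl⟩ := hi
  have := Nat.ceil_le.2 hk
  have := l.isLt
  rw [Finset.mem_Ioo]
  omega

/-! ### The probability space -/

theorem expMeasure_Ici_le {r : ℝ} (hr : 0 < r) {s : ℝ} (hs : 0 ≤ s) :
    ProbabilityTheory.expMeasure r (Set.Ici s) ≤ ENNReal.ofReal (Real.exp (-(r * s))) := by
  have := ProbabilityTheory.isProbabilityMeasure_expMeasure hr
  have h := ProbabilityTheory.cdf_expMeasure_eq hr s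
  rw [if_pos hs, ProbabilityTheory.cdf_eq_real] at h
  have hna : ProbabilityTheory.expMeasure r {s} = 0 := by
    unfold ProbabilityTheory.expMeasure ProbabilityTheory.gammaMeasure
    exact withDensity_absolutelyContinuous _ _ (by simp)
  have h2 : ProbabilityTheory.expMeasure r (Set.Ici s)
      ≤ ProbabilityTheory.expMeasure r (Set.Iic s)ᶜ := by
    rw [Set.compl_Iic, ← Set.Ioi_insert]
    refine (measure_union_le (s := {s}) _).trans ?_
    rw [hna, zero_add]
  refine h2.trans ?_
  rw [← ofReal_measureReal, probReal_compl_eq_one_sub measurableSet_Iic, h]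
  apply ENNReal.ofReal_le_ofReal
  linarith

theorem wt_true_pos (β : ℝ) : 0 < wt n β (fun _ => True) := by
  unfold wt
  simp only [if_true]
  exact Finset.sum_pos (fun σ _ => mallowsWeight_pos β σ) Finset.univ_nonempty

theorem mallowsMeasure_eq (β : ℝ) (P : Equiv.Perm (Fin n) → Prop) :
    mallowsMeasure n β {σ | P σ} = ENNReal.ofReal (wt n β P / wt n β (fun _ => True)) := by
  unfold mallowsMeasure
  rw [Measure.finsetSum_apply]
  have : ∀ σ : Equiv.Perm (Fin n),
      (ENNReal.ofReal (mallowsProb n β σ) • Measure.dirac σ) {σ | P σ}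
        = ENNReal.ofReal ((if P σ then mallowsWeight n β σ else 0) / wt n β (fun _ => True)) := by
    intro σ
    rw [Measure.smul_apply, Measure.dirac_apply' σ (s := {σ | P σ}) MeasurableSpace.measurableSet_top]
    by_cases h : P σ
    · simp [h, mallowsProb, wt]
    · simp [h]
  simp_rw [this]
  rw [← ENNReal.ofReal_sum_of_nonneg, ← Finset.sum_div]
  · rfl
  · intro σ _
    have := (mallowsWeight_pos β σ).le
    have := (wt_true_pos (n := n) β).le
    split_ifs <;> positivity

theorem isProbabilityMeasure_mallows (β : ℝ) : IsProbabilityMeasure (mallowsMeasure n β) := by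
  constructor
  have := mallowsMeasure_eq (n := n) β (fun _ => True)
  rw [div_self (wt_true_pos β).ne'] at this
  simpa using this

/-- With `d = l - k`, the event `b_k ≥ l` forces either a displacement `σ₀(k) - k > d / 2` or
`E_k ≥ d / 2`. -/
theorem hitRun_pair_le {β : ℝ} (hβ : 0 < β) (hβ1 : β ≤ 1) (k l : Fin n) (hkl : k < l)
    (hd : 1 ≤ β * ((l : ℕ) - (k : ℕ) : ℕ)) :
    hitRunMeasure n β {ω | k ∈ Hset n ω l}
      ≤ ENNReal.ofReal (4 * ((l : ℕ) - (k : ℕ) : ℕ)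
          * Real.exp (-(Real.sqrt (β * ((l : ℕ) - (k : ℕ) : ℕ)) / 26))) := by
  have := isProbabilityMeasure_mallows (n := n) β
  have := ProbabilityTheory.isProbabilityMeasure_expMeasure (r := 2 * β) (by positivity)
  have hkl' : (k : ℕ) < (l : ℕ) := hkl
  obtain ⟨d, hdef⟩ : ∃ d : ℕ, d = (l : ℕ) - (k : ℕ) := ⟨_, rfl⟩
  rw [← hdef] at hd ⊢
  have hl : (l : ℕ) = k + d := by omega
  set X := Real.sqrt (β * d) with hX
  have hX2 : X ^ 2 = β * d := Real.sq_sqrt (by positivity)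
  have hX1 : 1 ≤ X := by rw [hX]; exact Real.one_le_sqrt.2 hd
  have hd1 : (1 : ℝ) ≤ d := by nlinarith [Nat.cast_nonneg (α := ℝ) d]
  let S₁ : Set (Equiv.Perm (Fin n)) := {σ | (k : ℕ) + d / 2 < (σ k : ℕ)}
  let S₂ : Set (Fin n → ℝ) := Function.eval k ⁻¹' Set.Ici ((d : ℝ) / 2)
  have hsub : {ω | k ∈ Hset n ω l} ⊆ S₁ ×ˢ Set.univ ∪ Set.univ ×ˢ S₂ := by
    intro ω hω
    have hb : ((l : ℕ) : ℝ) ≤ bVal n ω k :=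
      (Finset.mem_filter.1 (show k ∈ Hset n ω l from hω)).2.2
    unfold bVal at hb
    by_cases h : (k : ℕ) + d / 2 < (ω.1 k : ℕ)
    · exact Or.inl ⟨h, trivial⟩
    · refine Or.inr ⟨trivial, ?_⟩
      change (d : ℝ) / 2 ≤ ω.2 k
      have h2 : max ((k : ℕ) : ℝ) ((ω.1 k : ℕ) : ℝ) ≤ k + d / 2 := by
        have a1 : ((ω.1 k : ℕ) : ℝ) ≤ ((k + d / 2 : ℕ) : ℝ) := by exact_mod_cast not_lt.1 h
        have a2 : ((d / 2 : ℕ) : ℝ) ≤ d / 2 := Nat.cast_div_le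
        push_cast at a1
        exact max_le (by linarith) (by linarith)
      rw [hl] at hb
      push_cast at hb
      linarith
  have m1 : mallowsMeasure n β S₁ ≤ ENNReal.ofReal (3 * d * Real.exp (-(X / 26))) := by
    rw [mallowsMeasure_eq]
    apply ENNReal.ofReal_le_ofReal
    rw [div_le_iff₀ (wt_true_pos β)]
    exact displacement_bound hβ hβ1 d hd k
  have m2 : (Measure.pi fun _ : Fin n => ProbabilityTheory.expMeasure (2 * β)) S₂
      ≤ ENNReal.ofReal (d * Real.exp (-(X / 26))) := by
    rw [(measurePreserving_eval (fun _ : Fin n => ProbabilityTheory.expMeasure (2 * β))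
      k).measure_preimage measurableSet_Ici.nullMeasurableSet]
    refine (expMeasure_Ici_le (by positivity) (by positivity)).trans ?_
    apply ENNReal.ofReal_le_ofReal
    have : Real.exp (-(2 * β * (d / 2))) ≤ Real.exp (-(X / 26)) :=
      Real.exp_le_exp.2 (by nlinarith)
    nlinarith [Real.exp_pos (-(X / 26))]
  refine (measure_mono hsub).trans ((measure_union_le _ _).trans ?_)
  unfold hitRunMeasure
  rw [Measure.prod_prod, Measure.prod_prod, measure_univ, measure_univ, mul_one, one_mul]
  refine (add_le_add m1 m2).trans (le_of_eq ?_)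
  rw [← ENNReal.ofReal_add (by positivity) (by positivity)]
  congr 1
  ring

end Aux

/-- There are absolute constants `C, c > 0` such that for all `n ≥ 1`, `0 < β ≤ 1`,
`l ∈ [n]`, and real `u ≥ β⁻¹`:
`P(max_{j ∈ H_l} (l - j) ≥ u) ≤ C u β⁻¹ exp(-c √(βu))`,
where the maximum over the empty set is `0` (this is `Finset.sup` with values in `ℕ`). -/
theorem statement13 :
    ∃ C c : ℝ, 0 < C ∧ 0 < c ∧
      ∀ n : ℕ, 0 < n → ∀ β : ℝ, 0 < β → β ≤ 1 → ∀ l : Fin n,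
        ∀ u : ℝ, β⁻¹ ≤ u →
          hitRunMeasure n β
              {ω | u ≤ ((((Hset n ω l).sup fun j => (l : ℕ) - (j : ℕ)) : ℕ) : ℝ)}
            ≤ ENNReal.ofReal (C * u * β⁻¹ * Real.exp (-c * Real.sqrt (β * u))) := by
  refine ⟨8 * (720 * 52 ^ 6), 1 / 52, by norm_num, by norm_num, ?_⟩
  intro n _ β hβ hβ1 l u hu
  have hu0 : 0 < u := lt_of_lt_of_le (inv_pos.2 hβ) hu
  let K : Finset (Fin n) := Finset.univ.filter fun k => k < l ∧ u ≤ ((l : ℕ) - (k : ℕ) : ℕ)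
  have hsub : {ω | u ≤ ((((Hset n ω l).sup fun j => (l : ℕ) - (j : ℕ)) : ℕ) : ℝ)}
      ⊆ ⋃ k ∈ K, {ω | k ∈ Hset n ω l} := by
    intro ω hω
    simp only [Set.mem_ofPred_eq] at hω
    rcases (Hset n ω l).eq_empty_or_nonempty with h | h
    · rw [h, Finset.sup_empty, bot_eq_zero, Nat.cast_zero] at hω
      linarith
    · obtain ⟨k, hk, hks⟩ := Finset.exists_mem_eq_sup _ h fun j : Fin n => (l : ℕ) - (j : ℕ)
      rw [hks] at hω
      have hkl : k < l := by
        simp only [Hset, Finset.mem_filter] at hk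
        exact hk.2.1
      simp only [Set.mem_iUnion]
      exact ⟨k, Finset.mem_filter.2 ⟨Finset.mem_univ _, hkl, hω⟩, hk⟩
  refine (measure_mono hsub).trans ((measure_biUnion_finset_le K _).trans ?_)
  have hterm : ∀ k ∈ K, hitRunMeasure n β {ω | k ∈ Hset n ω l} ≤ ENNReal.ofReal
      (4 * (720 * 52 ^ 6) * Real.exp (-(1 / 52) * Real.sqrt (β * u)) * (β ^ 3)⁻¹
        * ((((l : ℕ) - (k : ℕ) : ℕ) : ℝ) ^ 2)⁻¹) := by
    intro k hk
    obtain ⟨-, hkl, hku⟩ := Finset.mem_filter.1 hk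
    have hd : 1 ≤ β * ((l : ℕ) - (k : ℕ) : ℕ) := by
      have h := mul_le_mul_of_nonneg_left (hu.trans hku) hβ.le
      rwa [mul_inv_cancel₀ hβ.ne'] at h
    exact (hitRun_pair_le hβ hβ1 k l hkl hd).trans
      (ENNReal.ofReal_le_ofReal (exp_inv_sq_bound hβ _ hd hku))
  refine (Finset.sum_le_sum hterm).trans ?_
  rw [← ENNReal.ofReal_sum_of_nonneg (fun _ _ => by positivity), ← Finset.mul_sum]
  apply ENNReal.ofReal_le_ofReal
  have hs := sum_inv_sq_bound hu0 l
  have hpow : (β ^ 3)⁻¹ * (2 / u) ≤ 2 * (u * β⁻¹) := by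
    have h1 : 1 ≤ u * β := by
      have h := mul_le_mul_of_nonneg_right hu hβ.le
      rwa [inv_mul_cancel₀ hβ.ne'] at h
    have e : (β ^ 3)⁻¹ * (2 / u) = 2 * (u * β⁻¹) * (1 / (u * β) ^ 2) := by field_simp
    rw [e]
    refine mul_le_of_le_one_right (by positivity) ?_
    rw [div_le_one (by positivity)]
    exact one_le_pow₀ h1
  have hE := Real.exp_pos (-(1 / 52) * Real.sqrt (β * u))
  calc _ ≤ 4 * (720 * 52 ^ 6) * Real.exp (-(1 / 52) * Real.sqrt (β * u)) * (β ^ 3)⁻¹ * (2 / u) :=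
        mul_le_mul_of_nonneg_left hs (by positivity)
    _ = 4 * (720 * 52 ^ 6) * Real.exp (-(1 / 52) * Real.sqrt (β * u))
          * ((β ^ 3)⁻¹ * (2 / u)) := by ring
    _ ≤ 4 * (720 * 52 ^ 6) * Real.exp (-(1 / 52) * Real.sqrt (β * u)) * (2 * (u * β⁻¹)) :=
        mul_le_mul_of_nonneg_left hpow (by positivity)
    _ = _ := by ring
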